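/- (Exact first-order form of the entropy–covariance relation, Eq. (8).) Let 𝒜 be a finite nonempty set, let π : 𝒜 → ℝ be a probability distribution with π(a) > 0 for all a, and let A : 𝒜 → ℝ. For ε ∈ ℝ define the exponentially tilted distribution π_ε(a) = π(a)·exp(ε·A(a)) / Σ_{b∈𝒜} π(b)·exp(ε·A(b)). Then the function ε ↦ H(π_ε) is differentiable at ε = 0, and its derivative at 0 equals −Cov_{a∼π}(log π(a), A(a)) = −( Σ_a π(a)·log π(a)·A(a) − (Σ_a π(a)·log π(a))·(Σ_a π(a)·A(a)) ). -/

import Mathlib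

/-- The Shannon entropy of a distribution `p` on a finite action set. -/
noncomputable def entropy {𝒜 : Type*} [Fintype 𝒜] (p : 𝒜 → ℝ) : ℝ :=
  -∑ a : 𝒜, p a * Real.log (p a)

/-- (Exact first-order form of the entropy–covariance relation, Eq. (8).)
For the exponentially tilted family
`π_ε(a) = π(a)·exp(ε·A(a)) / ∑ b, π(b)·exp(ε·A(b))`, the entropy `ε ↦ H(π_ε)`
is differentiable at `ε = 0`, with derivative `−Cov_{a∼π}(log π(a), A(a))`. -/
theorem entropy_tilted_hasDerivAt_neg_cov {𝒜 : Type*} [Fintype 𝒜] [Nonempty 𝒜]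
    (π : 𝒜 → ℝ) (hπ_pos : ∀ a, 0 < π a) (hπ_sum : ∑ a : 𝒜, π a = 1)
    (A : 𝒜 → ℝ) :
    HasDerivAt
      (fun ε : ℝ => entropy
        (fun a => π a * Real.exp (ε * A a) / ∑ b : 𝒜, π b * Real.exp (ε * A b)))
      (-((∑ a : 𝒜, π a * Real.log (π a) * A a) -
          (∑ a : 𝒜, π a * Real.log (π a)) * (∑ a : 𝒜, π a * A a))) 0 := by
  have hnum : ∀ a, HasDerivAt (fun ε : ℝ => π a * Real.exp (ε * A a)) (π a * A a) 0 := by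
    intro a
    have h := (((hasDerivAt_id (0 : ℝ)).mul_const (A a)).exp).const_mul (π a)
    simpa using h
  have hZ : HasDerivAt (fun ε : ℝ => ∑ b : 𝒜, π b * Real.exp (ε * A b))
      (∑ b : 𝒜, π b * A b) 0 :=
    HasDerivAt.fun_sum (fun b _ => hnum b)
  have hZ0 : ∑ b : 𝒜, π b * Real.exp ((0 : ℝ) * A b) = 1 := by
    simpa using hπ_sum
  have hp : ∀ a, HasDerivAt
      (fun ε : ℝ => π a * Real.exp (ε * A a) / ∑ b : 𝒜, π b * Real.exp (ε * A b))
      (π a * A a - π a * ∑ b : 𝒜, π b * A b) 0 := by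
    intro a
    have h := (hnum a).fun_div hZ (by rw [hZ0]; exact one_ne_zero)
    rw [hZ0] at h
    simpa using h
  have hterm : ∀ a, HasDerivAt
      (fun ε : ℝ => (π a * Real.exp (ε * A a) / ∑ b : 𝒜, π b * Real.exp (ε * A b)) *
        Real.log (π a * Real.exp (ε * A a) / ∑ b : 𝒜, π b * Real.exp (ε * A b)))
      ((Real.log (π a) + 1) * (π a * A a - π a * ∑ b : 𝒜, π b * A b)) 0 := by
    intro a
    have h0 : π a * Real.exp ((0 : ℝ) * A a) / ∑ b : 𝒜, π b * Real.exp ((0 : ℝ) * A b)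
        = π a := by
      rw [hZ0]; simp
    exact HasDerivAt.comp_of_eq (h₂ := fun x : ℝ => x * Real.log x) 0
      (Real.hasDerivAt_mul_log (hπ_pos a).ne') (hp a) h0.symm
  have hsum := (HasDerivAt.fun_sum (u := Finset.univ) (fun a _ => hterm a)).fun_neg
  unfold entropy
  refine HasDerivAt.congr_deriv hsum ?_
  congr 1
  symm
  set m := ∑ b : 𝒜, π b * A b with hm
  have e : ∀ a, (Real.log (π a) + 1) * (π a * A a - π a * m)
      = π a * Real.log (π a) * A a - π a * Real.log (π a) * m + (π a * A a - π a * m) := by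
    intro a; ring
  simp only [e, Finset.sum_add_distrib, Finset.sum_sub_distrib, ← Finset.sum_mul]
  rw [hπ_sum, ← hm]
  ring
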